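/- arXiv:math/0503560 — 5 statements merged into one kernel-verified Lean document; each statement's English description precedes it below -/
import Mathlib

section
/- Let I ⊆ ℝ be an open interval, let a ∈ ℝ, and let α : ℝ → ℝ be differentiable on I with cos(α(u)) ≠ 0 and sin(α(u)) ≠ 0 for all u ∈ I, satisfying the meridian equation α'(u) = 1 − (a+1)/cos(α(u)) on I. Then the function u ↦ sin(α(u)) is twice differentiable on I and for every u ∈ I the Gaussian curvature of the warped metric du² + sin²α(u) dv², namely K(u) = −(d²/du²) sin(α(u)) / sin(α(u)), equals α'(u). -/
open Real

/-!
Multiplying the meridian equation by `cos α` gives `(sin α)' = cos α - (a + 1)`. The constant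
disappears on differentiating once more, which leaves the Jacobi equation
`(sin α)'' = -α' * sin α`, so the curvature is `α'`.
-/

/-- `α` satisfies the meridian equation with parameter `a` at the point `u`. The condition
`cos (α u) ≠ 0` is part of the notion, so that the quotient is never the junk value `x / 0 = 0`. -/
structure IsMeridianSolutionAt (a : ℝ) (α : ℝ → ℝ) (u : ℝ) : Prop where
  cos_ne_zero : cos (α u) ≠ 0
  hasDerivAt : HasDerivAt α (1 - (a + 1) / cos (α u)) u

namespace IsMeridianSolutionAt

open scoped Topology

variable {a u : ℝ} {α : ℝ → ℝ}

theorem hasDerivAt_sin (h : IsMeridianSolutionAt a α u) :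
    HasDerivAt (fun v => sin (α v)) (cos (α u) - (a + 1)) u := by
  have hmul : cos (α u) * (1 - (a + 1) / cos (α u)) = cos (α u) - (a + 1) := by
    rw [mul_sub, mul_one, mul_div_cancel₀ _ h.cos_ne_zero]
  exact hmul ▸ h.hasDerivAt.sin

theorem hasDerivAt_deriv_sin (h : ∀ᶠ v in 𝓝 u, IsMeridianSolutionAt a α v) :
    HasDerivAt (deriv fun v => sin (α v)) (-deriv α u * sin (α u)) u := by
  have hderiv : (deriv fun v => sin (α v)) =ᶠ[𝓝 u] fun v => cos (α v) - (a + 1) :=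
    h.mono fun _ hv => hv.hasDerivAt_sin.deriv
  have hα : HasDerivAt α (deriv α u) u :=
    h.self_of_nhds.hasDerivAt.differentiableAt.hasDerivAt
  have hcos : HasDerivAt (fun v => cos (α v) - (a + 1)) (-deriv α u * sin (α u)) u := by
    simpa only [neg_mul, mul_comm (deriv α u)] using hα.cos.sub_const (a + 1)
  exact hcos.congr_of_eventuallyEq hderiv

end IsMeridianSolutionAt

/-- If `α` solves the meridian equation `α' = 1 - (a+1)/cos α` on an open interval `I`
(with `cos (α u) ≠ 0` and `sin (α u) ≠ 0` on `I`), then `u ↦ sin (α u)` is twice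
differentiable on `I` and the Gaussian curvature
`K(u) = -(d²/du²) sin (α u) / sin (α u)` of the metric `du² + sin²α(u) dv²`
equals `α'(u)` on `I`. -/
theorem curvature_of_meridian_solution
    (p q : ℝ) (a : ℝ) (α : ℝ → ℝ)
    (I : Set ℝ) (hI : I = Set.Ioo p q)
    (hdiff : ∀ u ∈ I, DifferentiableAt ℝ α u)
    (hcos : ∀ u ∈ I, Real.cos (α u) ≠ 0)
    (hsin : ∀ u ∈ I, Real.sin (α u) ≠ 0)
    (hode : ∀ u ∈ I, deriv α u = 1 - (a + 1) / Real.cos (α u)) :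
    ∀ u ∈ I,
      DifferentiableAt ℝ (fun u => Real.sin (α u)) u ∧
      DifferentiableAt ℝ (deriv fun u => Real.sin (α u)) u ∧
      -(deriv (deriv fun u => Real.sin (α u)) u) / Real.sin (α u) = deriv α u := by
  intro u hu
  have hsol : ∀ v ∈ I, IsMeridianSolutionAt a α v := fun v hv =>
    ⟨hcos v hv, hode v hv ▸ (hdiff v hv).hasDerivAt⟩
  have hnhds : I ∈ nhds u := (hI ▸ isOpen_Ioo : IsOpen I).mem_nhds hu
  have hjacobi := IsMeridianSolutionAt.hasDerivAt_deriv_sin (Filter.mem_of_superset hnhds hsol)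
  refine ⟨(hsol u hu).hasDerivAt_sin.differentiableAt, hjacobi.differentiableAt, ?_⟩
  rw [hjacobi.deriv, neg_mul, neg_neg, mul_div_cancel_right₀ _ (hsin u hu)]
end

section
/- Let I ⊆ ℝ be a preconnected open set and let α : ℝ → ℝ be twice differentiable on I such that for all u ∈ I: sin(α(u)) ≠ 0, cos(α(u)) ≠ 0, α'(u) ≠ 0, α'(u) ≠ 1, and α'(u) = α'(u)² − (cos(α(u))/sin(α(u)))·α''(u). Then there exists a constant m ∈ ℝ such that α'(u) = 1 + m/cos(α(u)) for all u ∈ I. -/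
open Real

/-! The warping function `sin ∘ α` satisfies the Jacobi equation `(sin ∘ α)'' = -K · (sin ∘ α)`.
When `K = α'`, its right-hand side is the derivative of `cos ∘ α`, so on a connected domain
`(sin ∘ α)' = α' cos α` and `cos ∘ α` differ by a constant `m`. -/

section FirstIntegral

variable {α α' : ℝ → ℝ}

theorem hasDerivAt_mul_cos_eq_neg_curvature_mul_sin {a u : ℝ}
    (hα : HasDerivAt α (α' u) u) (hα' : HasDerivAt α' a u) (hsin : sin (α u) ≠ 0) :
    HasDerivAt (fun x => α' x * cos (α x))
      (-(α' u ^ 2 - cos (α u) / sin (α u) * a) * sin (α u)) u := by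
  refine (hα'.mul hα.cos).congr_deriv ?_
  field_simp
  ring

theorem exists_mul_cos_eq_cos_add_const_of_curvature_eq {α'' : ℝ → ℝ} {I : Set ℝ}
    (hIopen : IsOpen I) (hIconn : IsPreconnected I)
    (hα : ∀ u ∈ I, HasDerivAt α (α' u) u) (hα' : ∀ u ∈ I, HasDerivAt α' (α'' u) u)
    (hsin : ∀ u ∈ I, sin (α u) ≠ 0)
    (hcurv : ∀ u ∈ I, α' u = α' u ^ 2 - cos (α u) / sin (α u) * α'' u) :
    ∃ m : ℝ, ∀ u ∈ I, α' u * cos (α u) = cos (α u) + m := by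
  have hmul_cos : ∀ u ∈ I, HasDerivAt (fun x => α' x * cos (α x)) (-α' u * sin (α u)) u := by
    intro u hu
    have hjacobi := hasDerivAt_mul_cos_eq_neg_curvature_mul_sin (hα u hu) (hα' u hu) (hsin u hu)
    rwa [← hcurv u hu] at hjacobi
  have hcos : ∀ u ∈ I, HasDerivAt (fun x => cos (α x)) (-α' u * sin (α u)) u := fun u hu =>
    (hα u hu).cos.congr_deriv (by ring)
  exact hIopen.exists_eq_add_of_deriv_eq hIconn
    (fun u hu => (hmul_cos u hu).differentiableAt.differentiableWithinAt)
    (fun u hu => (hcos u hu).differentiableAt.differentiableWithinAt)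
    (fun u hu => (hmul_cos u hu).deriv.trans (hcos u hu).deriv.symm)

end FirstIntegral

/-- If on a preconnected open set `I` a twice differentiable `α` satisfies
`α' = (α')² - (cos α / sin α) · α''` with `sin (α u) ≠ 0`, `cos (α u) ≠ 0`,
`α' u ≠ 0` and `α' u ≠ 1`, then there is a constant `m` with
`α' u = 1 + m / cos (α u)` on `I`. -/
theorem meridian_equation_from_curvature
    (I : Set ℝ) (hIopen : IsOpen I) (hIconn : IsPreconnected I)
    (α : ℝ → ℝ)
    (hdiff : ∀ u ∈ I, DifferentiableAt ℝ α u)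
    (hdiff2 : ∀ u ∈ I, DifferentiableAt ℝ (deriv α) u)
    (hsin : ∀ u ∈ I, Real.sin (α u) ≠ 0)
    (hcos : ∀ u ∈ I, Real.cos (α u) ≠ 0)
    (hne0 : ∀ u ∈ I, deriv α u ≠ 0)
    (hne1 : ∀ u ∈ I, deriv α u ≠ 1)
    (hode : ∀ u ∈ I, deriv α u =
      (deriv α u) ^ 2 - (Real.cos (α u) / Real.sin (α u)) * deriv (deriv α) u) :
    ∃ m : ℝ, ∀ u ∈ I, deriv α u = 1 + m / Real.cos (α u) := by
  obtain ⟨m, hm⟩ := exists_mul_cos_eq_cos_add_const_of_curvature_eq hIopen hIconn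
    (fun u hu => (hdiff u hu).hasDerivAt) (fun u hu => (hdiff2 u hu).hasDerivAt) hsin hode
  refine ⟨m, fun u hu => ?_⟩
  calc
    deriv α u = (cos (α u) + m) / cos (α u) := eq_div_of_mul_eq (hcos u hu) (hm u hu)
    _ = 1 + m / cos (α u) := by rw [add_div, div_self (hcos u hu)]
end

section
/- Let a ∈ ℝ with a ≠ 0 and a ≠ −2, ω₀ ∈ ℝ, and set ω(v) = a·v + ω₀. Let I ⊆ ℝ be a preconnected open set and α : ℝ → ℝ differentiable on I such that for all v ∈ I: cos(α(v)) ≠ 0, cos(α(v)/2) ≠ 0, sin(ω(v)) ≠ 0, a + (a+2)·tan²(α(v)/2) > 0, and α'(v) = (cos(ω(v))/sin(ω(v)))·sin(α(v))·(cos(α(v)) − a − 1)/cos(α(v)). Then the function v ↦ tan(α(v)/2)·sin(ω(v))·(a + (a+2)·tan²(α(v)/2))^(−(a+1)/(a+2)) is constant on I; equivalently there is c ∈ ℝ with tan(α(v)/2)·sin(ω(v)) = c·(a + (a+2)·tan²(α(v)/2))^((a+1)/(a+2)) for all v ∈ I. -/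
open Real

/-!
With `q = cot ω`, the half-angle tangent `t = tan (α / 2)` turns the trajectory equation into
`(1 - t²) t' = -q t P`, where `P = a + (a + 2) t²`. The exponent `p = -(a + 1) / (a + 2)` is the one
for which `(t P ^ p)'` acquires the factor `1 - t²`, so that `w = t P ^ p` solves the linear
equation `w' = -(a q) w`. Since `ω' = a`, the function `s = sin ω` solves `s' = (a q) s`, and `w s`
is constant.
-/

theorem exists_mul_eq_const_of_hasDerivAt_neg_mul {𝕜 : Type*} [RCLike 𝕜] {I : Set 𝕜}
    (hIopen : IsOpen I) (hIconn : IsPreconnected I) {r f g : 𝕜 → 𝕜}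
    (hf : ∀ v ∈ I, HasDerivAt f (-r v * f v) v) (hg : ∀ v ∈ I, HasDerivAt g (r v * g v) v) :
    ∃ c, ∀ v ∈ I, f v * g v = c := by
  have hfg : ∀ v ∈ I, HasDerivAt (fun v => f v * g v) 0 v := fun v hv =>
    ((hf v hv).fun_mul (hg v hv)).congr_deriv (by ring)
  exact hIopen.exists_is_const_of_deriv_eq_zero hIconn
    (fun v hv => (hfg v hv).differentiableAt.differentiableWithinAt)
    (fun v hv => (hfg v hv).deriv)

theorem hasDerivAt_sin_comp_cot_mul {ω : ℝ → ℝ} {ω' x : ℝ} (hω : HasDerivAt ω ω' x)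
    (hsin : sin (ω x) ≠ 0) :
    HasDerivAt (fun v => sin (ω v)) (ω' * (cos (ω x) / sin (ω x)) * sin (ω x)) x :=
  hω.sin.congr_deriv (by field_simp)

theorem hasDerivAt_tan_half {α : ℝ → ℝ} {α' x : ℝ} (hα : HasDerivAt α α' x)
    (hcos : cos (α x / 2) ≠ 0) :
    HasDerivAt (fun v => tan (α v / 2)) ((1 + tan (α x / 2) ^ 2) / 2 * α') x := by
  refine ((hasDerivAt_tan hcos).comp x (hα.div_const 2)).congr_deriv ?_
  rw [one_div, ← inv_one_add_tan_sq hcos, inv_inv]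
  ring

theorem one_sub_tan_half_sq_mul_trajectory_field {y : ℝ} (a q : ℝ) (hcos : cos y ≠ 0)
    (hcos2 : cos (y / 2) ≠ 0) :
    (1 - tan (y / 2) ^ 2) *
        ((1 + tan (y / 2) ^ 2) / 2 * (q * sin y * (cos y - a - 1) / cos y)) =
      -q * tan (y / 2) * (a + (a + 2) * tan (y / 2) ^ 2) := by
  have hden : 1 + tan (y / 2) ^ 2 ≠ 0 := by positivity
  have hy : cos y ≠ -1 := by
    intro h
    have hsq : cos (y / 2) ^ 2 = 0 := by
      rw [cos_sq, mul_div_cancel₀ y two_ne_zero, h]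
      norm_num
    exact hcos2 (sq_eq_zero_iff.mp hsq)
  have hcosy : (1 + tan (y / 2) ^ 2) * cos y = 1 - tan (y / 2) ^ 2 := by
    rw [cos_eq_two_mul_tan_half_div_one_sub_tan_half_sq y hy, mul_div_cancel₀ _ hden]
  have hsiny : (1 + tan (y / 2) ^ 2) * sin y = 2 * tan (y / 2) := by
    rw [sin_eq_two_mul_tan_half_div_one_add_tan_half_sq y, mul_div_cancel₀ _ hden]
  generalize tan (y / 2) = t at hcosy hsiny ⊢
  calc (1 - t ^ 2) * ((1 + t ^ 2) / 2 * (q * sin y * (cos y - a - 1) / cos y))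
      = q / 2 * ((1 + t ^ 2) * sin y) * ((1 + t ^ 2) * cos y - (a + 1) * (1 + t ^ 2)) := by
        rw [← hcosy]
        field_simp
        ring
    _ = -q * t * (a + (a + 2) * t ^ 2) := by
        rw [hsiny, hcosy]
        ring

theorem hasDerivAt_id_mul_rpow_add_mul_sq {b d t : ℝ} (p : ℝ) (hP : b + d * t ^ 2 ≠ 0) :
    HasDerivAt (fun t => t * (b + d * t ^ 2) ^ p)
      ((b + (1 + 2 * p) * d * t ^ 2) * (b + d * t ^ 2) ^ (p - 1)) t := by
  have hpow := (((hasDerivAt_pow 2 t).const_mul d).const_add b).rpow_const (p := p) (Or.inl hP)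
  refine ((hasDerivAt_id' t).fun_mul hpow).congr_deriv ?_
  rw [rpow_sub_one hP]
  field_simp
  ring

/-- The factor of the first integral that depends only on the half-angle tangent `t = tan (α / 2)`:
the first integral is `halfTanFactor a t * sin ω`. It is meaningful only where `a ≠ -2` and
`0 < a + (a + 2) * t ^ 2`; elsewhere it takes junk values of division and `rpow`. -/
noncomputable def halfTanFactor (a t : ℝ) : ℝ :=
  t * (a + (a + 2) * t ^ 2) ^ (-((a + 1) / (a + 2)))

theorem halfTanFactor_mul_eq_iff {a t s c : ℝ} (hP : 0 < a + (a + 2) * t ^ 2) :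
    halfTanFactor a t * s = c ↔
      t * s = c * (a + (a + 2) * t ^ 2) ^ ((a + 1) / (a + 2)) := by
  rw [halfTanFactor, rpow_neg hP.le, mul_right_comm,
    mul_inv_eq_iff_eq_mul₀ (rpow_pos_of_pos hP _).ne']

theorem hasDerivAt_halfTanFactor {a t : ℝ} (ha : a + 2 ≠ 0) (hP : a + (a + 2) * t ^ 2 ≠ 0) :
    HasDerivAt (halfTanFactor a)
      (a * (1 - t ^ 2) * (a + (a + 2) * t ^ 2) ^ (-((a + 1) / (a + 2)) - 1)) t := by
  refine (hasDerivAt_id_mul_rpow_add_mul_sq (-((a + 1) / (a + 2))) hP).congr_deriv ?_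
  congr 1
  field_simp
  ring

theorem hasDerivAt_halfTanFactor_comp {a q t' x : ℝ} {t : ℝ → ℝ} (ha : a + 2 ≠ 0)
    (hP : a + (a + 2) * t x ^ 2 ≠ 0) (ht : HasDerivAt t t' x)
    (hode : (1 - t x ^ 2) * t' = -q * t x * (a + (a + 2) * t x ^ 2)) :
    HasDerivAt (fun v => halfTanFactor a (t v)) (-(a * q) * halfTanFactor a (t x)) x := by
  refine ((hasDerivAt_halfTanFactor ha hP).comp x ht).congr_deriv ?_
  rw [halfTanFactor, rpow_sub_one hP]
  generalize a + (a + 2) * t x ^ 2 = P at hP hode ⊢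
  calc a * (1 - t x ^ 2) * (P ^ (-((a + 1) / (a + 2))) / P) * t'
      = a * ((1 - t x ^ 2) * t') * (P ^ (-((a + 1) / (a + 2))) / P) := by ring
    _ = -(a * q) * (t x * P ^ (-((a + 1) / (a + 2)))) := by
        rw [hode]
        field_simp

theorem hasDerivAt_halfTanFactor_tan_half {a q x : ℝ} {α : ℝ → ℝ} (ha : a + 2 ≠ 0)
    (hcos : cos (α x) ≠ 0) (hcos2 : cos (α x / 2) ≠ 0)
    (hP : a + (a + 2) * tan (α x / 2) ^ 2 ≠ 0)
    (hα : HasDerivAt α (q * sin (α x) * (cos (α x) - a - 1) / cos (α x)) x) :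
    HasDerivAt (fun v => halfTanFactor a (tan (α v / 2)))
      (-(a * q) * halfTanFactor a (tan (α x / 2))) x :=
  hasDerivAt_halfTanFactor_comp ha hP (hasDerivAt_tan_half hα hcos2)
    (one_sub_tan_half_sq_mul_trajectory_field a q hcos hcos2)

/-- First integral of the trajectory equation for `a ≠ 0, -2`: along a solution
of `α' = (cos ω / sin ω) · sin α · (cos α - a - 1)/cos α` with `ω v = a v + ω₀`,
one has `tan(α/2) · sin ω = c · (a + (a+2) tan²(α/2))^((a+1)/(a+2))` for some
constant `c`. -/
theorem trajectory_first_integral_generic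
    (a ω₀ : ℝ) (ha0 : a ≠ 0) (ha2 : a ≠ -2)
    (I : Set ℝ) (hIopen : IsOpen I) (hIconn : IsPreconnected I)
    (α : ℝ → ℝ)
    (hdiff : ∀ v ∈ I, DifferentiableAt ℝ α v)
    (hcos : ∀ v ∈ I, Real.cos (α v) ≠ 0)
    (hcos2 : ∀ v ∈ I, Real.cos (α v / 2) ≠ 0)
    (hsinω : ∀ v ∈ I, Real.sin (a * v + ω₀) ≠ 0)
    (hpos : ∀ v ∈ I, a + (a + 2) * Real.tan (α v / 2) ^ 2 > 0)
    (hode : ∀ v ∈ I, deriv α v =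
      (Real.cos (a * v + ω₀) / Real.sin (a * v + ω₀)) * Real.sin (α v) *
        (Real.cos (α v) - a - 1) / Real.cos (α v)) :
    ∃ c : ℝ, ∀ v ∈ I,
      Real.tan (α v / 2) * Real.sin (a * v + ω₀) =
        c * (a + (a + 2) * Real.tan (α v / 2) ^ 2) ^ ((a + 1) / (a + 2)) := by
  have ha : a + 2 ≠ 0 := fun h => ha2 (eq_neg_of_add_eq_zero_left h)
  have hω (v : ℝ) : HasDerivAt (fun v => a * v + ω₀) a v := by
    simpa using ((hasDerivAt_id v).const_mul a).add_const ω₀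
  have hfactor : ∀ v ∈ I, HasDerivAt (fun v => halfTanFactor a (tan (α v / 2)))
      (-(a * (cos (a * v + ω₀) / sin (a * v + ω₀))) * halfTanFactor a (tan (α v / 2))) v :=
    fun v hv => hasDerivAt_halfTanFactor_tan_half ha (hcos v hv) (hcos2 v hv) (hpos v hv).ne'
      ((hdiff v hv).hasDerivAt.congr_deriv (hode v hv))
  have hsin : ∀ v ∈ I, HasDerivAt (fun v => sin (a * v + ω₀))
      (a * (cos (a * v + ω₀) / sin (a * v + ω₀)) * sin (a * v + ω₀)) v :=
    fun v hv => hasDerivAt_sin_comp_cot_mul (hω v) (hsinω v hv)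
  obtain ⟨c, hc⟩ := exists_mul_eq_const_of_hasDerivAt_neg_mul hIopen hIconn
    (r := fun v => a * (cos (a * v + ω₀) / sin (a * v + ω₀))) hfactor hsin
  exact ⟨c, fun v hv => (halfTanFactor_mul_eq_iff (hpos v hv)).mp (hc v hv)⟩
end

section
/- Let ω₀ ∈ ℝ and set ω(v) = −2v + ω₀. Let I ⊆ ℝ be a preconnected open set and α : ℝ → ℝ differentiable on I such that for all v ∈ I: cos(α(v)) ≠ 0, cos(α(v)/2) ≠ 0, sin(ω(v)) ≠ 0, and α'(v) = (cos(ω(v))/sin(ω(v)))·sin(α(v))·(cos(α(v)) + 1)/cos(α(v)). Then the function v ↦ tan(α(v)/2)·sin(ω(v))·exp(−tan²(α(v)/2)/2) is constant on I; equivalently there is c ∈ ℝ with tan(α(v)/2)·sin(ω(v)) = c·exp(tan²(α(v)/2)/2) for all v ∈ I. -/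
open Real

/-!
In the variable `t = tan (α / 2)` the trajectory equation separates as
`(1 / t - t) dt + d (log (sin ω)) = 0`, so `log t - t ^ 2 / 2 + log (sin ω)` is conserved.
Its exponential `t * sin ω * exp (-(t ^ 2 / 2))` is conserved also across the zeros of `sin ω`,
`cos α` and `t`.
-/

theorem exists_forall_eq_of_hasDerivWithinAt_zero {E : Type*} [NormedAddCommGroup E]
    [NormedSpace ℝ E] {f : ℝ → E} {s : Set ℝ} (hs : IsPreconnected s)
    (hf : ∀ x ∈ s, HasDerivWithinAt f 0 s x) : ∃ c, ∀ x ∈ s, f x = c := by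
  obtain rfl | ⟨x₀, hx₀⟩ := s.eq_empty_or_nonempty
  · simp
  refine ⟨f x₀, fun x hx => ?_⟩
  have hbound : ‖f x - f x₀‖ ≤ 0 * ‖x - x₀‖ :=
    hs.convex.norm_image_sub_le_of_norm_hasDerivWithin_le hf (fun _ _ => norm_zero.le) hx₀ hx
  rwa [zero_mul, norm_le_zero_iff, sub_eq_zero] at hbound

theorem hasDerivWithinAt_tan_half {α : ℝ → ℝ} {α' x : ℝ} {s : Set ℝ}
    (hα : HasDerivWithinAt α α' s x) (hcos : cos (α x / 2) ≠ 0) :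
    HasDerivWithinAt (fun y => tan (α y / 2)) ((1 + tan (α x / 2) ^ 2) * (α' / 2)) s x := by
  refine ((hasDerivAt_tan hcos).comp_hasDerivWithinAt x (hα.div_const 2)).congr_deriv ?_
  rw [← inv_one_add_tan_sq hcos, one_div, inv_inv]

theorem hasDerivWithinAt_mul_mul_exp_neg_sq_half {t p : ℝ → ℝ} {t' p' x : ℝ} {s : Set ℝ}
    (ht : HasDerivWithinAt t t' s x) (hp : HasDerivWithinAt p p' s x) :
    HasDerivWithinAt (fun y => t y * p y * exp (-(t y ^ 2 / 2)))
      (((1 - t x ^ 2) * t' * p x + t x * p') * exp (-(t x ^ 2 / 2))) s x := by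
  refine ((ht.fun_mul hp).fun_mul ((ht.fun_pow 2).div_const 2).fun_neg.exp).congr_deriv ?_
  push_cast
  ring

theorem cos_ne_neg_one_of_cos_half_ne_zero {θ : ℝ} (hθ : cos (θ / 2) ≠ 0) : cos θ ≠ -1 := by
  contrapose! hθ
  rw [← sq_eq_zero_iff, cos_sq, mul_div_cancel₀ θ two_ne_zero, hθ]
  norm_num

theorem tan_half_equation_of_trajectory_equation {θ θ' p p' : ℝ} (hθ : cos (θ / 2) ≠ 0)
    (h : 2 * θ' * cos θ * p + p' * sin θ * (cos θ + 1) = 0) :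
    (1 - tan (θ / 2) ^ 2) * ((1 + tan (θ / 2) ^ 2) * (θ' / 2)) * p + tan (θ / 2) * p' = 0 := by
  rw [sin_eq_two_mul_tan_half_div_one_add_tan_half_sq,
    cos_eq_two_mul_tan_half_div_one_sub_tan_half_sq θ (cos_ne_neg_one_of_cos_half_ne_zero hθ)] at h
  have hne : 1 + tan (θ / 2) ^ 2 ≠ 0 := by positivity
  field_simp at h ⊢
  linear_combination h / 2

theorem trajectory_equation_of_slope_eq {θ θ' p q : ℝ} (hθ : cos θ ≠ 0) (hp : p ≠ 0)
    (h : θ' = q / p * sin θ * (cos θ + 1) / cos θ) :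
    2 * θ' * cos θ * p + q * (-2) * sin θ * (cos θ + 1) = 0 := by
  rw [h]
  field_simp
  ring

/-- The trajectory equation is cleared of denominators and the trajectory may be parametrized by
any variable; `v` itself gives `ω' = -2`. -/
theorem trajectory_first_integral_a_eq_neg_two_general {I : Set ℝ} (hI : IsPreconnected I)
    {α ω α' ω' : ℝ → ℝ} (hα : ∀ s ∈ I, HasDerivWithinAt α (α' s) I s)
    (hω : ∀ s ∈ I, HasDerivWithinAt ω (ω' s) I s) (hcos2 : ∀ s ∈ I, cos (α s / 2) ≠ 0)
    (hode : ∀ s ∈ I, 2 * α' s * cos (α s) * sin (ω s) +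
      cos (ω s) * ω' s * sin (α s) * (cos (α s) + 1) = 0) :
    ∃ c : ℝ, ∀ s ∈ I, tan (α s / 2) * sin (ω s) = c * exp (tan (α s / 2) ^ 2 / 2) := by
  have hderiv : ∀ s ∈ I, HasDerivWithinAt
      (fun y => tan (α y / 2) * sin (ω y) * exp (-(tan (α y / 2) ^ 2 / 2))) 0 I s := by
    intro s hs
    have ht := hasDerivWithinAt_tan_half (hα s hs) (hcos2 s hs)
    refine (hasDerivWithinAt_mul_mul_exp_neg_sq_half ht (hω s hs).sin).congr_deriv ?_
    rw [tan_half_equation_of_trajectory_equation (hcos2 s hs) (hode s hs), zero_mul]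
  obtain ⟨c, hc⟩ := exists_forall_eq_of_hasDerivWithinAt_zero hI hderiv
  refine ⟨c, fun s hs => ?_⟩
  rw [← hc s hs, mul_assoc, ← exp_add, neg_add_cancel, exp_zero, mul_one]

/-- First integral of the trajectory equation for `a = -2`: along a solution of
`α' = (cos ω / sin ω) · sin α · (cos α + 1)/cos α` with `ω v = -2v + ω₀`, one has
`tan(α/2) · sin ω = c · exp(tan²(α/2)/2)` for some constant `c`. -/
theorem trajectory_first_integral_a_eq_neg_two
    (ω₀ : ℝ)
    (I : Set ℝ) (hIopen : IsOpen I) (hIconn : IsPreconnected I)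
    (α : ℝ → ℝ)
    (hdiff : ∀ v ∈ I, DifferentiableAt ℝ α v)
    (hcos : ∀ v ∈ I, Real.cos (α v) ≠ 0)
    (hcos2 : ∀ v ∈ I, Real.cos (α v / 2) ≠ 0)
    (hsinω : ∀ v ∈ I, Real.sin (-2 * v + ω₀) ≠ 0)
    (hode : ∀ v ∈ I, deriv α v =
      (Real.cos (-2 * v + ω₀) / Real.sin (-2 * v + ω₀)) * Real.sin (α v) *
        (Real.cos (α v) + 1) / Real.cos (α v)) :
    ∃ c : ℝ, ∀ v ∈ I,
      Real.tan (α v / 2) * Real.sin (-2 * v + ω₀) =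
        c * Real.exp (Real.tan (α v / 2) ^ 2 / 2) := by
  exact trajectory_first_integral_a_eq_neg_two_general hIconn
    (fun v hv => (hdiff v hv).hasDerivAt.hasDerivWithinAt)
    (fun _ _ => ((hasDerivAt_const_mul (-2)).add_const ω₀).hasDerivWithinAt) hcos2
    (fun v hv => trajectory_equation_of_slope_eq (hcos v hv) (hsinω v hv) (hode v hv))
end

section
/- Let K : ℝ → ℝ be differentiable, let I ⊆ ℝ be open, and let α : ℝ → ℝ be differentiable on I with α'(u) = K(α(u)) and sin(α(u)/2) ≠ 0 for all u ∈ I. Then u ↦ sin(α(u)/2) is twice differentiable on I and for every u ∈ I, −(d²/du²) sin(α(u)/2) / sin(α(u)/2) = (1/4)·K(α(u))·( K(α(u)) − 2·(cos(α(u)/2)/sin(α(u)/2))·K'(α(u)) ). -/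
open Real

/-!
Along a solution of the autonomous equation `α' = K(α)`, differentiation in `u` acts on functions
of `α` as the vector field `K d/dα`. The curvature formula comes from applying this field twice to
`sin (α / 2)`: differentiating the sine again produces the term in `K ^ 2`, and differentiating the
coefficient `K` produces the term in `K K'_α`.
-/

section AutonomousODE

open Filter Topology

variable {𝕜 F : Type*} [NontriviallyNormedField 𝕜] [NormedAddCommGroup F] [NormedSpace 𝕜 F]
  {α K : 𝕜 → 𝕜} {u : 𝕜}

theorem deriv_comp_eventuallyEq_of_ode {g g' : 𝕜 → F}
    (hα : ∀ᶠ v in 𝓝 u, HasDerivAt α (K (α v)) v)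
    (hg : ∀ᶠ x in 𝓝 (α u), HasDerivAt g (g' x) x) :
    deriv (g ∘ α) =ᶠ[𝓝 u] (fun x => K x • g' x) ∘ α := by
  have hcont : ContinuousAt α u := hα.self_of_nhds.continuousAt
  filter_upwards [hα, hcont.eventually hg] with v hαv hgv
  exact (hgv.scomp v hαv).deriv

theorem hasDerivAt_deriv_comp_of_ode {g g' : 𝕜 → F} {g'' : F} {K' : 𝕜}
    (hα : ∀ᶠ v in 𝓝 u, HasDerivAt α (K (α v)) v)
    (hg : ∀ᶠ x in 𝓝 (α u), HasDerivAt g (g' x) x)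
    (hg' : HasDerivAt g' g'' (α u)) (hK : HasDerivAt K K' (α u)) :
    HasDerivAt (deriv (g ∘ α)) (K (α u) • (K (α u) • g'' + K' • g' (α u))) u :=
  ((hK.fun_smul hg').scomp u hα.self_of_nhds).congr_of_eventuallyEq
    (deriv_comp_eventuallyEq_of_ode hα hg)

end AutonomousODE

theorem hasDerivAt_sin_half (x : ℝ) : HasDerivAt (fun y => sin (y / 2)) (cos (x / 2) / 2) x := by
  simpa only [mul_one_div] using ((hasDerivAt_id' x).div_const 2).sin

theorem hasDerivAt_cos_half_div_two (x : ℝ) :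
    HasDerivAt (fun y => cos (y / 2) / 2) (-(sin (x / 2) / 4)) x :=
  (((hasDerivAt_id' x).div_const 2).cos.div_const 2).congr_deriv (by ring)

section SinHalf

variable {α K : ℝ → ℝ} {u : ℝ}

theorem hasDerivAt_deriv_sin_half_of_ode {K' : ℝ}
    (hα : ∀ᶠ v in nhds u, HasDerivAt α (K (α v)) v) (hK : HasDerivAt K K' (α u)) :
    HasDerivAt (deriv fun v => sin (α v / 2))
      (K (α u) * (K' * (cos (α u / 2) / 2) - K (α u) * (sin (α u / 2) / 4))) u :=
  (hasDerivAt_deriv_comp_of_ode hα (.of_forall hasDerivAt_sin_half)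
    (hasDerivAt_cos_half_div_two (α u)) hK).congr_deriv (by simp only [smul_eq_mul]; ring)

theorem curvature_of_image_submanifold_general
    (hα : ∀ᶠ v in nhds u, HasDerivAt α (K (α v)) v) (hK : DifferentiableAt ℝ K (α u))
    (hsin : sin (α u / 2) ≠ 0) :
    DifferentiableAt ℝ (fun v => sin (α v / 2)) u ∧
    DifferentiableAt ℝ (deriv fun v => sin (α v / 2)) u ∧
    -(deriv (deriv fun v => sin (α v / 2)) u) / sin (α u / 2) =
      (1 / 4) * K (α u) *
        (K (α u) - 2 * (cos (α u / 2) / sin (α u / 2)) * deriv K (α u)) := by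
  have hfirst := (hα.self_of_nhds.div_const 2).sin
  have hsecond := hasDerivAt_deriv_sin_half_of_ode hα hK.hasDerivAt
  refine ⟨hfirst.differentiableAt, hsecond.differentiableAt, ?_⟩
  rw [hsecond.deriv]
  field_simp
  ring

end SinHalf

/-- Curvature of the image `ξ(M)` of a totally geodesic unit vector field: if
`α' u = K (α u)` and `sin (α u / 2) ≠ 0` on an open set `I`, then
`u ↦ sin (α u / 2)` is twice differentiable on `I` and
`-(d²/du²) sin(α/2) / sin(α/2) = (1/4) K (K - 2 cot(α/2) K'_α)`. -/
theorem curvature_of_image_submanifold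
    (K : ℝ → ℝ) (hK : Differentiable ℝ K)
    (I : Set ℝ) (hIopen : IsOpen I)
    (α : ℝ → ℝ)
    (hdiff : ∀ u ∈ I, DifferentiableAt ℝ α u)
    (hode : ∀ u ∈ I, deriv α u = K (α u))
    (hsin : ∀ u ∈ I, Real.sin (α u / 2) ≠ 0) :
    ∀ u ∈ I,
      DifferentiableAt ℝ (fun u => Real.sin (α u / 2)) u ∧
      DifferentiableAt ℝ (deriv fun u => Real.sin (α u / 2)) u ∧
      -(deriv (deriv fun u => Real.sin (α u / 2)) u) / Real.sin (α u / 2) =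
        (1 / 4) * K (α u) *
          (K (α u) - 2 * (Real.cos (α u / 2) / Real.sin (α u / 2)) * deriv K (α u)) := by
  intro u hu
  refine curvature_of_image_submanifold_general ?_ (hK (α u)) (hsin u hu)
  filter_upwards [hIopen.mem_nhds hu] with v hv using hode v hv ▸ (hdiff v hv).hasDerivAt
end
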